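/- arXiv:2205.14111 — 2 statements merged into one kernel-verified Lean document; each statement's English description precedes it below -/
import Mathlib

section
/- Let Ω ⊂ ℝ^d be a convex body with B(0,1) ⊂ Ω ⊂ B(0,d), and let ρ be its Dubiner-type metric. There is a constant C* > 0 depending only on d such that for every n ≥ 1 and every polynomial Q of total degree at most n in d variables with max_{z∈Ω}|Q(z)| ≤ 1, we have |Q(x) − Q(y)| ≤ C* · n · ρ(x,y) for all x, y ∈ Ω. -/
open scoped InnerProductSpace

/-- `a_ξ = min_{z ∈ Ω} z·ξ`. -/
noncomputable def dubA {d : ℕ} (Ω : Set (EuclideanSpace ℝ (Fin d)))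
    (ξ : EuclideanSpace ℝ (Fin d)) : ℝ :=
  sInf ((fun z => ⟪z, ξ⟫_ℝ) '' Ω)

/-- The Dubiner-type metric
`ρ_Ω(x,y) = max_{ξ ∈ S^{d-1}} |√(x·ξ - a_ξ) - √(y·ξ - a_ξ)|`. -/
noncomputable def dubMetric {d : ℕ} (Ω : Set (EuclideanSpace ℝ (Fin d)))
    (x y : EuclideanSpace ℝ (Fin d)) : ℝ :=
  ⨆ ξ : Metric.sphere (0 : EuclideanSpace ℝ (Fin d)) 1,
    |Real.sqrt (⟪x, (ξ : EuclideanSpace ℝ (Fin d))⟫_ℝ - dubA Ω ξ) -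
      Real.sqrt (⟪y, (ξ : EuclideanSpace ℝ (Fin d))⟫_ℝ - dubA Ω ξ)|

/- The proof joins `x` to `y` by three arcs of *inward parabolas* `t ↦ p + t v + (t²/2) (c - p)`,
where `c` is the centre of an inscribed ball of radius `r`. Such a parabola stays in `Ω` for
`|t| ≤ 1` as soon as `⟪v, ξ⟫² ≤ r (⟪p, ξ⟫ - a_ξ)` for all unit `ξ`, by AM-GM in each direction `ξ`.
Along it `Q` is a polynomial of degree at most `2n` in `t`, and Bernstein's inequality on `[-1, 1]`
bounds its variation. With `σ = ρ(x, y) / √r`, the points `x` and `y` are pushed inward for time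
`σ` along parabolas with `v = 0`; the parabola based at the midpoint with
`v = (1 - σ²/2) (y - x) / (2σ)` then joins the two pushed points during the times `[-σ, σ]`.
This `v` is admissible because `(a² - b²)² ≤ 2 (a - b)² (a² + b²)` for the square roots `a`, `b` of
the gaps of `x` and `y` in direction `ξ`. -/

theorem abs_sqrt_sub_sqrt_le (a b : ℝ) : |√a - √b| ≤ √|a - b| := by
  wlog hba : b ≤ a generalizing a b
  · rw [abs_sub_comm, abs_sub_comm a]
    exact this b a (le_of_not_ge hba)
  rw [abs_of_nonneg (sub_nonneg.2 (Real.sqrt_le_sqrt hba)), abs_of_nonneg (sub_nonneg.2 hba),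
    sub_le_iff_le_add]
  refine Real.sqrt_le_iff.2 ⟨by positivity, ?_⟩
  have hsq : √(a - b) ^ 2 = a - b := Real.sq_sqrt (sub_nonneg.2 hba)
  have hb : b ≤ √b ^ 2 := Real.sq_sqrt'.symm ▸ le_max_left b 0
  nlinarith [Real.sqrt_nonneg (a - b), Real.sqrt_nonneg b]

section Bernstein

open Polynomial

theorem expand_contract_add_X_mul_expand_contract_divX {A : Type*} [CommSemiring A] (P : A[X]) :
    expand A 2 (contract 2 P) + X * expand A 2 (contract 2 P.divX) = P := by
  ext k
  rw [coeff_add, coeff_expand two_pos, coeff_contract two_ne_zero]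
  rcases k with _ | k
  · simp
  rw [coeff_X_mul, coeff_expand two_pos, coeff_contract two_ne_zero, coeff_divX]
  split_ifs with h h' h' <;> first | omega | simp_all [Nat.div_mul_cancel]

/-- The odd part of a polynomial: the `B` in the decomposition `P(X) = F(X²) + X B(X²)`. -/
noncomputable def oddPart {A : Type*} [CommSemiring A] (P : A[X]) : A[X] :=
  contract 2 P.divX

theorem eval_sub_eval_neg {A : Type*} [CommRing A] (P : A[X]) (t : A) :
    P.eval t - P.eval (-t) = 2 * (t * (oddPart P).eval (t ^ 2)) := by
  have hsplit (u : A) :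
      P.eval u = (contract 2 P).eval (u ^ 2) + u * (oddPart P).eval (u ^ 2) := by
    conv_lhs => rw [← expand_contract_add_X_mul_expand_contract_divX P]
    simp only [oddPart, eval_add, eval_mul, eval_X, expand_eval]
  rw [hsplit t, hsplit (-t), neg_sq]
  ring

theorem eval_zero_oddPart {A : Type*} [CommSemiring A] (P : A[X]) :
    (oddPart P).eval 0 = (derivative P).eval 0 := by
  rw [← coeff_zero_eq_eval_zero, ← coeff_zero_eq_eval_zero, oddPart, coeff_contract two_ne_zero,
    coeff_divX, coeff_derivative]
  simp

theorem natDegree_X_mul_oddPart_sq_le {A : Type*} [CommSemiring A] (P : A[X]) :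
    (X * oddPart P ^ 2).natDegree ≤ P.natDegree := by
  rcases eq_or_ne (oddPart P) 0 with h | h
  · simp [h]
  have hlead : P.coeff ((oddPart P).natDegree * 2 + 1) ≠ 0 := by
    rwa [← coeff_divX, ← coeff_contract two_ne_zero, ← oddPart, coeff_natDegree,
      leadingCoeff_ne_zero]
  calc (X * oddPart P ^ 2).natDegree ≤ 1 + 2 * (oddPart P).natDegree :=
        natDegree_mul_le_of_le natDegree_X_le natDegree_pow_le
    _ = (oddPart P).natDegree * 2 + 1 := by ring
    _ ≤ P.natDegree := le_natDegree_of_ne_zero hlead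

theorem derivative_eval_zero_le_sq_natDegree {R : ℝ[X]}
    (hR : ∀ s ∈ Set.Icc (0 : ℝ) 1, R.eval s ∈ Set.Icc (0 : ℝ) 1) :
    (derivative R).eval 0 ≤ (R.natDegree : ℝ) ^ 2 := by
  set ℓ : ℝ[X] := C (1 / 2) - C (1 / 2) * X
  set S : ℝ[X] := 1 - C 2 * R.comp ℓ
  have hℓ : ℓ.natDegree ≤ 1 := by
    simp only [ℓ]
    compute_degree
  have hdeg : S.degree ≤ R.natDegree := by
    rw [← natDegree_le_iff_degree_le]
    calc S.natDegree ≤ (R.comp ℓ).natDegree := by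
          refine (natDegree_sub_le _ _).trans (max_le (by simp) (natDegree_C_mul_le _ _))
      _ ≤ R.natDegree * ℓ.natDegree := natDegree_comp_le
      _ ≤ R.natDegree := by nlinarith
  have hbound : ∀ x ∈ Set.Icc (-1 : ℝ) 1, |S.eval x| ≤ 1 := fun x hx => by
    obtain ⟨h0, h1⟩ := hR (1 / 2 - 1 / 2 * x) ⟨by linarith [hx.2], by linarith [hx.1]⟩
    simp only [S, ℓ, eval_sub, eval_one, eval_mul, eval_C, eval_comp, eval_X]
    exact abs_le.2 ⟨by linarith, by linarith⟩
  have hderiv : (derivative S).eval 1 = (derivative R).eval 0 := by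
    simp [S, ℓ, derivative_comp]
  have hmarkov :=
    Chebyshev.eval_iterate_derivative_le_of_forall_abs_le_one (k := 1) le_rfl hdeg hbound
  simp only [Function.iterate_one, hderiv, Chebyshev.derivative_T_eval_one] at hmarkov
  exact_mod_cast hmarkov

theorem abs_derivative_eval_zero_le {P : ℝ[X]} (hP : ∀ t ∈ Set.Icc (-1 : ℝ) 1, |P.eval t| ≤ 1) :
    |(derivative P).eval 0| ≤ P.natDegree := by
  -- The odd part `t B(t²)` of `P` is bounded by `1`, so Markov's inequality applies to `s B(s)²`,
  -- whose derivative at `0` is `B(0)² = P'(0)²`.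
  have hR : ∀ s ∈ Set.Icc (0 : ℝ) 1, (X * oddPart P ^ 2).eval s ∈ Set.Icc (0 : ℝ) 1 := by
    intro s hs
    have hmem : √s ∈ Set.Icc (-1 : ℝ) 1 :=
      ⟨by linarith [Real.sqrt_nonneg s], Real.sqrt_le_one.2 hs.2⟩
    have hodd := eval_sub_eval_neg P √s
    have hpos := abs_le.1 (hP _ hmem)
    have hneg := abs_le.1 (hP (-√s) ⟨by linarith [hmem.2], by linarith [hmem.1]⟩)
    have hsq : (X * oddPart P ^ 2).eval s = (√s * (oddPart P).eval (√s ^ 2)) ^ 2 := by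
      simp [mul_pow, Real.sq_sqrt hs.1]
    rw [hsq]
    exact ⟨sq_nonneg _, (sq_le_one_iff_abs_le_one _).2 (abs_le.2 ⟨by linarith, by linarith⟩)⟩
  apply abs_le_of_sq_le_sq _ (Nat.cast_nonneg _)
  calc (derivative P).eval 0 ^ 2 = (derivative (X * oddPart P ^ 2)).eval 0 := by
        simp [eval_zero_oddPart]
    _ ≤ ((X * oddPart P ^ 2).natDegree : ℝ) ^ 2 := derivative_eval_zero_le_sq_natDegree hR
    _ ≤ (P.natDegree : ℝ) ^ 2 := by gcongr; exact natDegree_X_mul_oddPart_sq_le P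

theorem abs_derivative_eval_le {P : ℝ[X]} {a δ : ℝ} (hδ : 0 < δ)
    (hP : ∀ t ∈ Set.Icc (a - δ) (a + δ), |P.eval t| ≤ 1) :
    |(derivative P).eval a| ≤ P.natDegree / δ := by
  set L := P.comp (C a + C δ * X)
  have hL : |(derivative L).eval 0| ≤ L.natDegree :=
    abs_derivative_eval_zero_le fun t ht => by
      simp only [L, eval_comp, eval_add, eval_mul, eval_C, eval_X]
      exact hP _ ⟨by nlinarith [ht.1], by nlinarith [ht.2]⟩
  have hdeg : L.natDegree ≤ P.natDegree := by
    have hlin : (C a + C δ * X).natDegree ≤ 1 := by compute_degree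
    exact natDegree_comp_le.trans (by nlinarith)
  have hderiv : (derivative L).eval 0 = δ * (derivative P).eval a := by
    simp [L, derivative_comp]
  rw [hderiv, abs_mul, abs_of_pos hδ] at hL
  rw [le_div_iff₀' hδ]
  exact hL.trans (by exact_mod_cast hdeg)

theorem abs_eval_sub_eval_le {P : ℝ[X]} (hP : ∀ t ∈ Set.Icc (-1 : ℝ) 1, |P.eval t| ≤ 1) {s t : ℝ}
    (hs : s ∈ Set.Icc (-(1 / 2) : ℝ) (1 / 2)) (ht : t ∈ Set.Icc (-(1 / 2) : ℝ) (1 / 2)) :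
    |P.eval s - P.eval t| ≤ 2 * P.natDegree * |s - t| := by
  refine (convex_Icc _ _).norm_image_sub_le_of_norm_hasDerivWithin_le
    (fun a _ => (P.hasDerivAt a).hasDerivWithinAt) (fun a ha => ?_) ht hs
  have := abs_derivative_eval_le (P := P) (a := a) one_half_pos fun u hu =>
    hP u ⟨by linarith [hu.1, ha.1], by linarith [hu.2, ha.2]⟩
  simpa [mul_comm] using this

end Bernstein

section InwardParabola

variable {E : Type*} [AddCommGroup E] [Module ℝ E] {K : Set E} {c p x y : E} {σ : ℝ}

/-- The parabola through `p` with velocity `v` that curves towards `c`. -/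
noncomputable def inwardParabola (c p v : E) (t : ℝ) : E :=
  p + t • v + (t ^ 2 / 2) • (c - p)

theorem inwardParabola_zero_mem (hconv : Convex ℝ K) (hc : c ∈ K) (hp : p ∈ K) {t : ℝ}
    (ht : t ∈ Set.Icc (-1 : ℝ) 1) : inwardParabola c p 0 t ∈ K := by
  have ht2 : t ^ 2 ≤ 1 := (sq_le_one_iff_abs_le_one t).2 (abs_le.2 ht)
  rw [inwardParabola, smul_zero, add_zero]
  exact hconv.add_smul_sub_mem hp hc ⟨by positivity, by linarith⟩

/-- The velocity at the midpoint of `x` and `y` of the inward parabola that joins the two points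
reached from `x` and `y` after moving straight inward for time `σ`. -/
noncomputable def connectingVelocity (x y : E) (σ : ℝ) : E :=
  ((1 - σ ^ 2 / 2) / (2 * σ)) • (y - x)

theorem inwardParabola_connectingVelocity (hσ : σ ≠ 0) :
    inwardParabola c (midpoint ℝ x y) (connectingVelocity x y σ) σ = inwardParabola c y 0 σ := by
  simp only [inwardParabola, connectingVelocity, midpoint_eq_smul_add, invOf_eq_inv]
  match_scalars <;> field_simp <;> ring

theorem inwardParabola_connectingVelocity_neg (hσ : σ ≠ 0) :
    inwardParabola c (midpoint ℝ x y) (connectingVelocity x y σ) (-σ) =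
      inwardParabola c x 0 σ := by
  simp only [inwardParabola, connectingVelocity, midpoint_eq_smul_add, invOf_eq_inv]
  match_scalars <;> field_simp <;> ring

end InwardParabola

section Dubiner

variable {d : ℕ} {Ω : Set (EuclideanSpace ℝ (Fin d))} {c p v x y ξ : EuclideanSpace ℝ (Fin d)}
  {r σ : ℝ}

/-- The slack `p·ξ - a_ξ` of `p` in the supporting half-space of `Ω` with inner normal `ξ`. -/
noncomputable def dubGap (Ω : Set (EuclideanSpace ℝ (Fin d))) (ξ p : EuclideanSpace ℝ (Fin d)) :
    ℝ :=
  ⟪p, ξ⟫_ℝ - dubA Ω ξ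

theorem dubGap_nonneg (hc : IsCompact Ω) (hp : p ∈ Ω) : 0 ≤ dubGap Ω ξ p :=
  sub_nonneg.2 (csInf_le (hc.image (by fun_prop)).bddBelow ⟨p, hp, rfl⟩)

theorem dubGap_smul {k : ℝ} (hk : 0 ≤ k) : dubGap Ω (k • ξ) p = k * dubGap Ω ξ p := by
  have hdubA : dubA Ω (k • ξ) = k * dubA Ω ξ := by
    rw [dubA, dubA, ← smul_eq_mul, ← Real.sInf_smul_of_nonneg hk, ← Set.image_smul,
      Set.image_image]
    simp only [real_inner_smul_right, smul_eq_mul]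
  rw [dubGap, dubGap, hdubA, real_inner_smul_right, mul_sub]

theorem dubGap_sub_dubGap : dubGap Ω ξ x - dubGap Ω ξ y = ⟪x - y, ξ⟫_ℝ := by
  simp [dubGap, inner_sub_left]

theorem dubGap_midpoint :
    dubGap Ω ξ (midpoint ℝ x y) = (dubGap Ω ξ x + dubGap Ω ξ y) / 2 := by
  simp only [dubGap, midpoint_eq_smul_add, invOf_eq_inv, real_inner_smul_left, inner_add_left]
  ring

theorem le_dubGap_of_closedBall_subset (hc : IsCompact Ω) (hr : 0 ≤ r)
    (hball : Metric.closedBall c r ⊆ Ω) (hξ : ‖ξ‖ = 1) : r ≤ dubGap Ω ξ c := by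
  have hmem : c - r • ξ ∈ Ω := hball (by simp [norm_smul, hξ, abs_of_nonneg hr])
  have hdiff : dubGap Ω ξ c - dubGap Ω ξ (c - r • ξ) = r := by
    simp [dubGap_sub_dubGap, real_inner_smul_left, hξ]
  linarith [dubGap_nonneg hc hmem (ξ := ξ)]

theorem exists_dubGap_neg (hclosed : IsClosed Ω) (hconv : Convex ℝ Ω) (hne : Ω.Nonempty)
    (hp : p ∉ Ω) : ∃ ξ, dubGap Ω ξ p < 0 := by
  obtain ⟨f, u, hfp, hfΩ⟩ := geometric_hahn_banach_point_closed hconv hclosed hp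
  set ξ := (InnerProductSpace.toDual ℝ (EuclideanSpace ℝ (Fin d))).symm f
  have hf (z : EuclideanSpace ℝ (Fin d)) : ⟪z, ξ⟫_ℝ = f z := by
    rw [real_inner_comm, InnerProductSpace.toDual_symm_apply]
  have hu : u ≤ dubA Ω ξ := by
    refine le_csInf (hne.image _) ?_
    rintro _ ⟨z, hz, rfl⟩
    exact (hfΩ z hz).le.trans_eq (hf z).symm
  exact ⟨ξ, by rw [dubGap, hf]; linarith⟩

theorem mem_of_forall_dubGap_nonneg (hclosed : IsClosed Ω) (hconv : Convex ℝ Ω)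
    (hne : Ω.Nonempty) (h : ∀ ξ, ‖ξ‖ = 1 → 0 ≤ dubGap Ω ξ p) : p ∈ Ω := by
  by_contra hp
  obtain ⟨ξ, hξ⟩ := exists_dubGap_neg hclosed hconv hne hp
  have hξ0 : ξ ≠ 0 := by
    rintro rfl
    have hzero := dubGap_smul (Ω := Ω) (ξ := 0) (p := p) le_rfl
    rw [smul_zero, zero_mul] at hzero
    exact hξ.ne hzero
  have hunit := h (‖ξ‖⁻¹ • ξ) (norm_smul_inv_norm hξ0)
  rw [dubGap_smul (by positivity)] at hunit
  exact hunit.not_gt (mul_neg_of_pos_of_neg (by positivity) hξ)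

theorem abs_sqrt_dubGap_sub_le_dubMetric (Ω : Set (EuclideanSpace ℝ (Fin d)))
    (x y : EuclideanSpace ℝ (Fin d)) (hξ : ‖ξ‖ = 1) :
    |√(dubGap Ω ξ x) - √(dubGap Ω ξ y)| ≤ dubMetric Ω x y := by
  let f : Metric.sphere (0 : EuclideanSpace ℝ (Fin d)) 1 → ℝ :=
    fun η => |√(dubGap Ω η x) - √(dubGap Ω η y)|
  have hbdd : BddAbove (Set.range f) := by
    refine ⟨√‖x - y‖, ?_⟩
    rintro _ ⟨η, rfl⟩
    refine (abs_sqrt_sub_sqrt_le _ _).trans (Real.sqrt_le_sqrt ?_)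
    rw [dubGap_sub_dubGap]
    simpa using abs_real_inner_le_norm (x - y) (η : EuclideanSpace ℝ (Fin d))
  exact le_ciSup hbdd ⟨ξ, by simpa using hξ⟩

theorem dubMetric_nonneg (Ω : Set (EuclideanSpace ℝ (Fin d))) (x y : EuclideanSpace ℝ (Fin d)) :
    0 ≤ dubMetric Ω x y :=
  Real.iSup_nonneg fun _ => abs_nonneg _

theorem dubMetric_pos (hc : IsCompact Ω) (hx : x ∈ Ω) (hy : y ∈ Ω) (hxy : x ≠ y) :
    0 < dubMetric Ω x y := by
  have hpos : 0 < ‖x - y‖ := norm_pos_iff.2 (sub_ne_zero.2 hxy)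
  set ξ := ‖x - y‖⁻¹ • (x - y)
  have hξ : ‖ξ‖ = 1 := by simp [ξ, norm_smul, hpos.ne']
  have hinner : ⟪x - y, ξ⟫_ℝ = ‖x - y‖ := by
    rw [real_inner_smul_right, real_inner_self_eq_norm_sq]
    field_simp
  have hgap : dubGap Ω ξ x ≠ dubGap Ω ξ y := by
    rw [← sub_ne_zero, dubGap_sub_dubGap, hinner]
    exact hpos.ne'
  have hsqrt : √(dubGap Ω ξ x) ≠ √(dubGap Ω ξ y) :=
    (Real.sqrt_inj (dubGap_nonneg hc hx) (dubGap_nonneg hc hy)).not.2 hgap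
  exact (abs_pos.2 (sub_ne_zero.2 hsqrt)).trans_le (abs_sqrt_dubGap_sub_le_dubMetric Ω x y hξ)

theorem sq_inner_sub_le (hc : IsCompact Ω) (hx : x ∈ Ω) (hy : y ∈ Ω) (hξ : ‖ξ‖ = 1) :
    ⟪y - x, ξ⟫_ℝ ^ 2 ≤ 4 * dubMetric Ω x y ^ 2 * dubGap Ω ξ (midpoint ℝ x y) := by
  set a := √(dubGap Ω ξ x)
  set b := √(dubGap Ω ξ y)
  have ha2 : a ^ 2 = dubGap Ω ξ x := Real.sq_sqrt (dubGap_nonneg hc hx)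
  have hb2 : b ^ 2 = dubGap Ω ξ y := Real.sq_sqrt (dubGap_nonneg hc hy)
  have hab : (a - b) ^ 2 ≤ dubMetric Ω x y ^ 2 :=
    sq_le_sq' (by linarith [neg_le_of_abs_le (abs_sqrt_dubGap_sub_le_dubMetric Ω x y hξ)])
      (le_of_abs_le (abs_sqrt_dubGap_sub_le_dubMetric Ω x y hξ))
  calc ⟪y - x, ξ⟫_ℝ ^ 2 = (a - b) ^ 2 * (a + b) ^ 2 := by
        rw [← dubGap_sub_dubGap (Ω := Ω), ← ha2, ← hb2]; ring
    _ ≤ dubMetric Ω x y ^ 2 * (2 * (a ^ 2 + b ^ 2)) := by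
        gcongr
        exact add_sq_le
    _ = 4 * dubMetric Ω x y ^ 2 * dubGap Ω ξ (midpoint ℝ x y) := by
        rw [dubGap_midpoint, ha2, hb2]; ring

theorem dubGap_inwardParabola (t : ℝ) : dubGap Ω ξ (inwardParabola c p v t) =
    (1 - t ^ 2 / 2) * dubGap Ω ξ p + t * ⟪v, ξ⟫_ℝ + t ^ 2 / 2 * dubGap Ω ξ c := by
  simp only [dubGap, inwardParabola, inner_add_left, inner_sub_left, real_inner_smul_left]
  ring

theorem inwardParabola_mem (hc : IsCompact Ω) (hconv : Convex ℝ Ω) (hr : 0 ≤ r)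
    (hball : Metric.closedBall c r ⊆ Ω) (hp : p ∈ Ω)
    (hv : ∀ ξ, ‖ξ‖ = 1 → ⟪v, ξ⟫_ℝ ^ 2 ≤ r * dubGap Ω ξ p) {t : ℝ} (ht : t ∈ Set.Icc (-1 : ℝ) 1) :
    inwardParabola c p v t ∈ Ω := by
  refine mem_of_forall_dubGap_nonneg hc.isClosed hconv ⟨p, hp⟩ fun ξ hξ => ?_
  have hgc : r ≤ dubGap Ω ξ c := le_dubGap_of_closedBall_subset hc hr hball hξ
  have hgp : 0 ≤ dubGap Ω ξ p := dubGap_nonneg hc hp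
  have ht2 : t ^ 2 ≤ 1 := (sq_le_one_iff_abs_le_one t).2 (abs_le.2 ht)
  set θ := 1 - t ^ 2 / 2
  have hθ : t ^ 2 ≤ 4 * θ * (1 - θ) := by
    simp only [θ]
    nlinarith [mul_nonneg (sq_nonneg t) (sub_nonneg.2 ht2)]
  have hamgm : (t * ⟪v, ξ⟫_ℝ) ^ 2 ≤ (θ * dubGap Ω ξ p + (1 - θ) * r) ^ 2 :=
    calc (t * ⟪v, ξ⟫_ℝ) ^ 2 = t ^ 2 * ⟪v, ξ⟫_ℝ ^ 2 := mul_pow _ _ _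
      _ ≤ 4 * θ * (1 - θ) * (r * dubGap Ω ξ p) :=
        mul_le_mul hθ (hv ξ hξ) (sq_nonneg _) ((sq_nonneg t).trans hθ)
      _ = 4 * (θ * dubGap Ω ξ p) * ((1 - θ) * r) := by ring
      _ ≤ (θ * dubGap Ω ξ p + (1 - θ) * r) ^ 2 := four_mul_le_sq_add _ _
  have hθ0 : 0 ≤ θ := by simp only [θ]; linarith
  have hθ1 : 1 - θ = t ^ 2 / 2 := by simp only [θ]; ring
  have hθ1' : 0 ≤ 1 - θ := hθ1 ▸ by positivity
  have hinner := neg_le_of_abs_le (abs_le_of_sq_le_sq hamgm (by positivity))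
  rw [dubGap_inwardParabola, ← hθ1]
  linarith [mul_le_mul_of_nonneg_left hgc hθ1']

theorem sq_inner_connectingVelocity_le (hc : IsCompact Ω) (hx : x ∈ Ω) (hy : y ∈ Ω)
    (hσ : 0 < σ) (hσ' : σ ≤ 1) (hρ : dubMetric Ω x y ^ 2 ≤ r * σ ^ 2) (hξ : ‖ξ‖ = 1) :
    ⟪connectingVelocity x y σ, ξ⟫_ℝ ^ 2 ≤ r * dubGap Ω ξ (midpoint ℝ x y) := by
  have hgap : 0 ≤ dubGap Ω ξ (midpoint ℝ x y) := by
    rw [dubGap_midpoint]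
    linarith [dubGap_nonneg hc hx (ξ := ξ), dubGap_nonneg hc hy (ξ := ξ)]
  have hfactor : (1 - σ ^ 2 / 2) ^ 2 ≤ 1 := by
    rw [sq_le_one_iff_abs_le_one, abs_le]
    constructor <;> nlinarith
  calc ⟪connectingVelocity x y σ, ξ⟫_ℝ ^ 2
      = (1 - σ ^ 2 / 2) ^ 2 * (⟪y - x, ξ⟫_ℝ ^ 2 / (4 * σ ^ 2)) := by
        rw [connectingVelocity, real_inner_smul_left]; field_simp; ring
    _ ≤ 1 * (4 * (r * σ ^ 2) * dubGap Ω ξ (midpoint ℝ x y) / (4 * σ ^ 2)) := by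
        gcongr
        exact (sq_inner_sub_le hc hx hy hξ).trans (by gcongr)
    _ = r * dubGap Ω ξ (midpoint ℝ x y) := by field_simp

theorem abs_eval_inwardParabola_sub_le {n : ℕ} {Q : MvPolynomial (Fin d) ℝ}
    (hQ : Q.totalDegree ≤ n) (hb : ∀ z ∈ Ω, |MvPolynomial.eval (fun i => z i) Q| ≤ 1)
    (hΩ : ∀ t ∈ Set.Icc (-1 : ℝ) 1, inwardParabola c p v t ∈ Ω) {s t : ℝ}
    (hs : s ∈ Set.Icc (-(1 / 2) : ℝ) (1 / 2)) (ht : t ∈ Set.Icc (-(1 / 2) : ℝ) (1 / 2)) :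
    |MvPolynomial.eval (fun i => inwardParabola c p v s i) Q -
      MvPolynomial.eval (fun i => inwardParabola c p v t i) Q| ≤ 4 * n * |s - t| := by
  open Polynomial in
  set γ : Fin d → ℝ[X] := fun i => C (p i) + C (v i) * X + C ((c i - p i) / 2) * X ^ 2
  set P : ℝ[X] := MvPolynomial.aeval γ Q
  have hdeg : P.natDegree ≤ n * 2 :=
    MvPolynomial.aeval_natDegree_le Q hQ γ fun i => by simp only [γ]; compute_degree
  have heval (u : ℝ) : P.eval u = MvPolynomial.eval (fun i => inwardParabola c p v u i) Q := by
    have hcoord : (fun i => (γ i).eval u) = fun i => inwardParabola c p v u i := by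
      ext i
      simp only [γ, inwardParabola, eval_add, eval_mul, eval_pow, eval_C, eval_X, PiLp.add_apply,
        PiLp.smul_apply, PiLp.sub_apply, smul_eq_mul]
      ring
    have hconst : (evalRingHom u).comp C = RingHom.id ℝ := by ext; simp
    rw [← hcoord, ← MvPolynomial.eval₂_id, ← hconst]
    exact MvPolynomial.polynomial_eval_eval₂ C γ Q
  rw [← heval, ← heval]
  have hP := abs_eval_sub_eval_le (fun u hu => heval u ▸ hb _ (hΩ u hu)) hs ht
  have hdeg' : (P.natDegree : ℝ) ≤ n * 2 := by exact_mod_cast hdeg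
  calc _ ≤ 2 * P.natDegree * |s - t| := hP
    _ ≤ 2 * (n * 2) * |s - t| := by gcongr
    _ = 4 * n * |s - t| := by ring

theorem abs_eval_sub_eval_inwardParabola_zero_le {n : ℕ} {Q : MvPolynomial (Fin d) ℝ}
    (hQ : Q.totalDegree ≤ n) (hb : ∀ z ∈ Ω, |MvPolynomial.eval (fun i => z i) Q| ≤ 1)
    (hconv : Convex ℝ Ω) (hc : c ∈ Ω) (hp : p ∈ Ω) (hσ : σ ∈ Set.Icc (0 : ℝ) (1 / 2)) :
    |MvPolynomial.eval (fun i => p i) Q -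
      MvPolynomial.eval (fun i => inwardParabola c p 0 σ i) Q| ≤ 4 * n * σ := by
  have hstart : inwardParabola c p 0 0 = p := by simp [inwardParabola]
  have hvar := abs_eval_inwardParabola_sub_le hQ hb (c := c) (p := p) (v := 0) (s := 0) (t := σ)
    (fun t ht => inwardParabola_zero_mem hconv hc hp ht) ⟨by norm_num, by norm_num⟩
    ⟨by linarith [hσ.1], hσ.2⟩
  rwa [hstart, zero_sub, abs_neg, abs_of_nonneg hσ.1] at hvar

theorem abs_eval_inwardParabola_zero_sub_le {n : ℕ} {Q : MvPolynomial (Fin d) ℝ}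
    (hQ : Q.totalDegree ≤ n) (hb : ∀ z ∈ Ω, |MvPolynomial.eval (fun i => z i) Q| ≤ 1)
    (hc : IsCompact Ω) (hconv : Convex ℝ Ω) (hr : 0 ≤ r) (hball : Metric.closedBall c r ⊆ Ω)
    (hx : x ∈ Ω) (hy : y ∈ Ω) (hσ : 0 < σ) (hσ' : σ ≤ 1 / 2)
    (hρ : dubMetric Ω x y ^ 2 ≤ r * σ ^ 2) :
    |MvPolynomial.eval (fun i => inwardParabola c x 0 σ i) Q -
      MvPolynomial.eval (fun i => inwardParabola c y 0 σ i) Q| ≤ 8 * n * σ := by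
  have hv (ξ : EuclideanSpace ℝ (Fin d)) (hξ : ‖ξ‖ = 1) :=
    sq_inner_connectingVelocity_le hc hx hy hσ (by linarith) hρ hξ
  have hvar := abs_eval_inwardParabola_sub_le hQ hb (s := -σ) (t := σ)
    (fun t ht => inwardParabola_mem hc hconv hr hball (hconv.midpoint_mem hx hy) hv ht)
    ⟨by linarith, by linarith⟩ ⟨by linarith, hσ'⟩
  rw [inwardParabola_connectingVelocity hσ.ne', inwardParabola_connectingVelocity_neg hσ.ne']
    at hvar
  calc _ ≤ 4 * n * |-σ - σ| := hvar
    _ = 8 * n * σ := by rw [abs_of_neg (by linarith)]; ring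

theorem abs_eval_sub_eval_le_two_mul {n : ℕ} {Q : MvPolynomial (Fin d) ℝ}
    (hQ : Q.totalDegree ≤ n) (hb : ∀ z ∈ Ω, |MvPolynomial.eval (fun i => z i) Q| ≤ 1)
    (hx : x ∈ Ω) (hy : y ∈ Ω) :
    |MvPolynomial.eval (fun i => x i) Q - MvPolynomial.eval (fun i => y i) Q| ≤ 2 * n := by
  rcases n.eq_zero_or_pos with rfl | hn
  · rw [MvPolynomial.totalDegree_eq_zero_iff_eq_C.1 (Nat.le_zero.1 hQ)]
    simp
  have hn' : (1 : ℝ) ≤ n := by exact_mod_cast hn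
  linarith [abs_sub (MvPolynomial.eval (fun i => x i) Q) (MvPolynomial.eval (fun i => y i) Q),
    hb x hx, hb y hy]

end Dubiner

theorem norm_control_general {d : ℕ} {Ω : Set (EuclideanSpace ℝ (Fin d))} (hc : IsCompact Ω)
    (hconv : Convex ℝ Ω) {c : EuclideanSpace ℝ (Fin d)} {r : ℝ} (hr : 0 < r)
    (hball : Metric.closedBall c r ⊆ Ω) {n : ℕ} {Q : MvPolynomial (Fin d) ℝ}
    (hQ : Q.totalDegree ≤ n) (hb : ∀ z ∈ Ω, |MvPolynomial.eval (fun i => z i) Q| ≤ 1)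
    {x y : EuclideanSpace ℝ (Fin d)} (hx : x ∈ Ω) (hy : y ∈ Ω) :
    |MvPolynomial.eval (fun i => x i) Q - MvPolynomial.eval (fun i => y i) Q| ≤
      16 * n * (dubMetric Ω x y / √r) := by
  rcases eq_or_ne x y with rfl | hxy
  · rw [sub_self, abs_zero]
    have := dubMetric_nonneg Ω x x
    positivity
  have hρ := dubMetric_pos hc hx hy hxy
  set σ := dubMetric Ω x y / √r with hσ_def
  have hσ : 0 < σ := by positivity
  rcases le_or_gt σ (1 / 2) with hσ' | hσ'
  · have hρσ : dubMetric Ω x y ^ 2 = r * σ ^ 2 := by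
      rw [hσ_def, div_pow, Real.sq_sqrt hr.le, mul_div_cancel₀ _ hr.ne']
    have hcΩ : c ∈ Ω := hball (Metric.mem_closedBall_self hr.le)
    have hpush {p : EuclideanSpace ℝ (Fin d)} (hp : p ∈ Ω) :=
      abs_eval_sub_eval_inwardParabola_zero_le hQ hb hconv hcΩ hp ⟨hσ.le, hσ'⟩
    have hjoin :=
      abs_eval_inwardParabola_zero_sub_le hQ hb hc hconv hr.le hball hx hy hσ hσ' hρσ.le
    have hx' := abs_le.1 (hpush hx)
    have hy' := abs_le.1 (hpush hy)
    have hj := abs_le.1 hjoin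
    exact abs_le.2 ⟨by linarith, by linarith⟩
  · refine (abs_eval_sub_eval_le_two_mul hQ hb hx hy).trans ?_
    nlinarith [n.cast_nonneg (α := ℝ)]

theorem norm_control {d : ℕ} (hd : 1 ≤ d) :
    ∃ C > (0 : ℝ), ∀ Ω : Set (EuclideanSpace ℝ (Fin d)),
      IsCompact Ω → Convex ℝ Ω →
      Metric.closedBall (0 : EuclideanSpace ℝ (Fin d)) 1 ⊆ Ω →
      Ω ⊆ Metric.closedBall (0 : EuclideanSpace ℝ (Fin d)) d →
      ∀ n : ℕ, 1 ≤ n → ∀ Q : MvPolynomial (Fin d) ℝ, Q.totalDegree ≤ n →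
      (∀ z ∈ Ω, |MvPolynomial.eval (fun i => z i) Q| ≤ 1) →
      ∀ x ∈ Ω, ∀ y ∈ Ω,
        |MvPolynomial.eval (fun i => x i) Q - MvPolynomial.eval (fun i => y i) Q| ≤
          C * n * dubMetric Ω x y := by
  refine ⟨16, by norm_num, fun Ω hc hconv hball _ n _ Q hQ hb x hx y hy => ?_⟩
  simpa using norm_control_general hc hconv one_pos hball hQ hb hx hy
end

section
/- Let Ω ⊂ ℝ^d be a convex body with B(0,1) ⊂ Ω ⊂ B(0,d) and Dubiner-type metric ρ. There exist constants C > 1 and c ∈ (0,1) depending only on d such that for every x ∈ Ω and n ∈ ℕ there is a polynomial P of total degree at most n in d variables with P(x) = 1 and 0 ≤ P(z) ≤ C·exp(−c√(n·ρ(x,z))) for all z ∈ Ω. -/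
open scoped InnerProductSpace

/-!
Fix `x` and `N`, and put `r = 2 √L / N`, where `L` bounds the diameter of `Ω`. On the unit sphere
consider `h ξ = r² + 2 r √(x·ξ - a_ξ)`; the points `z` at distance at most `r` from `x` satisfy
`|(x - z)·ξ| ≤ h ξ` for all `ξ`. Among the vectors `ξ / h ξ` choose a basis with almost maximal
determinant. By Cramer's rule the `d` chosen directions control all the others, so if
`ρ(x, z) ≥ C_d r` then `√(z·ξ - a_ξ)` is at distance at least `r` from `√(x·ξ - a_ξ)` for one of
these `d` directions. In each of them a univariate polynomial of degree `2 N`, built from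
Chebyshev polynomials, is `1` at `x`, lies in `[0, 1]`, and is at most `7 / 8` where the square
roots differ by `r`. The product `Q_N` over the `d` directions thus has degree `2 d N` and is at
most `7 / 8` wherever `N ρ(x, z)` is large.

Finally `P = ∏ₖ Q_{Nₖ} ^ (2 ^ k)` with `Nₖ ≈ n / (4 d 4 ^ k)` has degree at most `n`. If
`n ρ(x, z) ≈ 4 ^ k`, then the `k`-th factor alone is at most
`(7 / 8) ^ (2 ^ k) ≤ exp (-c √(n ρ(x, z)))`.
-/

section Fejer

/-- The Fejér kernel `(sin (N φ / 2) / (N sin (φ / 2)))²`, normalised so that its value at `0` is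
`1`. -/
noncomputable def fejerKernel (N : ℕ) (φ : ℝ) : ℝ :=
  ‖(∑ j ∈ Finset.range N, Complex.exp (φ * Complex.I) ^ j) / N‖ ^ 2

lemma fejerKernel_nonneg (N : ℕ) (φ : ℝ) : 0 ≤ fejerKernel N φ :=
  sq_nonneg _

lemma fejerKernel_eq_sum_cos (N : ℕ) (φ : ℝ) :
    fejerKernel N φ =
      (∑ j ∈ Finset.range N, ∑ k ∈ Finset.range N, Real.cos (((j : ℝ) - k) * φ)) / N ^ 2 := by
  have hre (j : ℕ) : (Complex.exp (φ * Complex.I) ^ j).re = Real.cos (j * φ) := by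
    rw [← Complex.exp_nat_mul, ← mul_assoc]
    exact_mod_cast Complex.exp_ofReal_mul_I_re (j * φ)
  have him (j : ℕ) : (Complex.exp (φ * Complex.I) ^ j).im = Real.sin (j * φ) := by
    rw [← Complex.exp_nat_mul, ← mul_assoc]
    exact_mod_cast Complex.exp_ofReal_mul_I_im (j * φ)
  rw [fejerKernel, norm_div, div_pow, Complex.norm_natCast, ← Complex.normSq_eq_norm_sq,
    Complex.normSq_apply, Complex.re_sum, Complex.im_sum, Finset.sum_mul_sum, Finset.sum_mul_sum]
  simp only [hre, him, ← Finset.sum_add_distrib, sub_mul, Real.cos_sub]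

lemma fejerKernel_mul_sin_sq_le (N : ℕ) (φ : ℝ) :
    fejerKernel N (2 * φ) * (N * Real.sin φ) ^ 2 ≤ 1 := by
  rcases eq_or_ne (N : ℝ) 0 with hN | hN
  · simp [hN]
  set w := Complex.exp ((2 * φ : ℝ) * Complex.I) with hw
  have hw_norm : ‖w‖ = 1 := Complex.norm_exp_ofReal_mul_I _
  have hw_sub : ‖w - 1‖ = 2 * |Real.sin φ| := by
    rw [hw, mul_comm, Complex.norm_exp_I_mul_ofReal_sub_one, mul_div_cancel_left₀ _ two_ne_zero,
      Real.norm_eq_abs, abs_mul, abs_two]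
  have hgeom : ‖∑ j ∈ Finset.range N, w ^ j‖ * (2 * |Real.sin φ|) ≤ 2 := by
    rw [← hw_sub, ← norm_mul, geom_sum_mul]
    calc ‖w ^ N - 1‖ ≤ ‖w ^ N‖ + ‖(1 : ℂ)‖ := norm_sub_le _ _
      _ = 2 := by rw [norm_pow, hw_norm, one_pow, norm_one, one_add_one_eq_two]
  calc fejerKernel N (2 * φ) * (N * Real.sin φ) ^ 2
      = (‖∑ j ∈ Finset.range N, w ^ j‖ * |Real.sin φ|) ^ 2 := by
        rw [fejerKernel, norm_div, Complex.norm_natCast, mul_pow _ |_|, sq_abs, ← hw]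
        field_simp
    _ ≤ 1 := pow_le_one₀ (by positivity) (by linarith)

lemma fejerKernel_le_quarter {N : ℕ} {φ : ℝ} (h : 4 ≤ (N * Real.sin φ) ^ 2) :
    fejerKernel N (2 * φ) ≤ 1 / 4 := by
  nlinarith [fejerKernel_mul_sin_sq_le N φ, fejerKernel_nonneg N (2 * φ)]

end Fejer

section Needle

open Polynomial

/-- A polynomial of degree at most `2 N` with values in `[0, 1]` on `[-1, 1]`, which is `1` at `u₀`
and bounded away from `1` outside a neighbourhood of `u₀` of radius about `1 / N` in the angular
variable `θ`, `u = cos θ`: in terms of `θ` the average of squares is a combination of `1` and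
values of `fejerKernel`, where those with a negative sign are small away from `u₀`. -/
noncomputable def needle (N : ℕ) (u₀ : ℝ) : ℝ[X] :=
  1 - C (1 / (4 * (N : ℝ) ^ 2)) * ∑ j ∈ Finset.range N, ∑ k ∈ Finset.range N,
    (Chebyshev.T ℝ ((j : ℤ) - k) - C ((Chebyshev.T ℝ ((j : ℤ) - k)).eval u₀)) ^ 2

lemma eval_needle (N : ℕ) (u₀ u : ℝ) :
    (needle N u₀).eval u = 1 - (∑ j ∈ Finset.range N, ∑ k ∈ Finset.range N,
      ((Chebyshev.T ℝ ((j : ℤ) - k)).eval u - (Chebyshev.T ℝ ((j : ℤ) - k)).eval u₀) ^ 2) /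
        (4 * N ^ 2) := by
  simp only [needle, eval_sub, eval_mul, eval_C, eval_one, eval_finsetSum, eval_pow]
  ring

lemma eval_needle_self (N : ℕ) (u₀ : ℝ) : (needle N u₀).eval u₀ = 1 := by
  simp [eval_needle]

lemma eval_needle_le_one (N : ℕ) (u₀ u : ℝ) : (needle N u₀).eval u ≤ 1 := by
  rw [eval_needle, sub_le_self_iff]
  positivity

lemma eval_needle_nonneg (N : ℕ) {u₀ u : ℝ} (hu₀ : |u₀| ≤ 1) (hu : |u| ≤ 1) :
    0 ≤ (needle N u₀).eval u := by
  have hterm (m : ℤ) :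
      ((Chebyshev.T ℝ m).eval u - (Chebyshev.T ℝ m).eval u₀) ^ 2 ≤ 4 := by
    have := abs_le.1 (Chebyshev.abs_eval_T_real_le_one m hu)
    have := abs_le.1 (Chebyshev.abs_eval_T_real_le_one m hu₀)
    nlinarith
  rw [eval_needle, sub_nonneg]
  refine div_le_one_of_le₀ ?_ (by positivity)
  calc _ ≤ ∑ _j ∈ Finset.range N, ∑ _k ∈ Finset.range N, (4 : ℝ) :=
        Finset.sum_le_sum fun j _ => Finset.sum_le_sum fun k _ => hterm _
    _ = 4 * N ^ 2 := by
      simp only [Finset.sum_const, Finset.card_range, nsmul_eq_mul]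
      ring

lemma natDegree_needle_le (N : ℕ) (u₀ : ℝ) : (needle N u₀).natDegree ≤ 2 * N := by
  refine (natDegree_sub_le _ _).trans (max_le (by simp) ((natDegree_C_mul_le _ _).trans ?_))
  refine natDegree_sum_le_of_forall_le _ _ fun j hj =>
    natDegree_sum_le_of_forall_le _ _ fun k hk => natDegree_pow_le_of_le 2 ?_
  rw [natDegree_sub_C, Chebyshev.natDegree_T]
  rw [Finset.mem_range] at hj hk
  omega

lemma eval_needle_cos {N : ℕ} (hN : N ≠ 0) (θ₀ θ : ℝ) :
    (needle N (Real.cos θ₀)).eval (Real.cos θ) =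
      1 - (1 + (fejerKernel N (2 * θ) + fejerKernel N (2 * θ₀)) / 2
        - fejerKernel N (θ + θ₀) - fejerKernel N (θ - θ₀)) / 4 := by
  have hprod (x y : ℝ) : (Real.cos x - Real.cos y) ^ 2 =
      1 + (Real.cos (2 * x) + Real.cos (2 * y)) / 2 - Real.cos (x + y) - Real.cos (x - y) := by
    rw [Real.cos_two_mul, Real.cos_two_mul, Real.cos_add, Real.cos_sub]
    ring
  have hpair (m : ℝ) : (Real.cos (m * θ) - Real.cos (m * θ₀)) ^ 2 =
      1 + (Real.cos (m * (2 * θ)) + Real.cos (m * (2 * θ₀))) / 2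
        - Real.cos (m * (θ + θ₀)) - Real.cos (m * (θ - θ₀)) := by
    rw [hprod, mul_left_comm 2, mul_left_comm 2, mul_add, mul_sub]
  have hkernel (φ : ℝ) : ∑ j ∈ Finset.range N, ∑ k ∈ Finset.range N,
      Real.cos (((j : ℝ) - k) * φ) = N ^ 2 * fejerKernel N φ := by
    rw [fejerKernel_eq_sum_cos, mul_div_cancel₀ _ (by positivity)]
  have hsum : ∑ j ∈ Finset.range N, ∑ k ∈ Finset.range N,
      (Real.cos (((j : ℝ) - k) * θ) - Real.cos (((j : ℝ) - k) * θ₀)) ^ 2 =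
      N ^ 2 * (1 + (fejerKernel N (2 * θ) + fejerKernel N (2 * θ₀)) / 2
        - fejerKernel N (θ + θ₀) - fejerKernel N (θ - θ₀)) := by
    simp only [hpair, Finset.sum_sub_distrib, Finset.sum_add_distrib, ← Finset.sum_div, hkernel,
      Finset.sum_const, Finset.card_range, nsmul_eq_mul]
    ring
  simp only [eval_needle, Chebyshev.T_real_cos, Int.cast_sub, Int.cast_natCast, hsum]
  field_simp

lemma sin_sub_sin_sq_le_sin_sub_sq {a b : ℝ} (h : 0 ≤ Real.sin a * Real.sin b) :
    (Real.sin a - Real.sin b) ^ 2 ≤ Real.sin (a - b) ^ 2 := by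
  have hdiff : Real.sin (a - b) ^ 2 - (Real.sin a - Real.sin b) ^ 2 =
      2 * (Real.sin a * Real.sin b * (1 - Real.cos (a - b))) := by
    rw [Real.sin_sub, Real.cos_sub]
    linear_combination Real.sin a ^ 2 * Real.sin_sq_add_cos_sq b +
      Real.sin b ^ 2 * Real.sin_sq_add_cos_sq a
  linarith [mul_nonneg h (sub_nonneg.2 (Real.cos_le_one (a - b)))]

lemma sin_sub_sq_le_sin_add_sq {a b : ℝ} (hsin : 0 ≤ Real.sin a * Real.sin b)
    (hcos : 0 ≤ Real.cos a * Real.cos b) : Real.sin (a - b) ^ 2 ≤ Real.sin (a + b) ^ 2 := by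
  rw [Real.sin_sub, Real.sin_add]
  linarith [mul_nonneg hsin hcos]

lemma eval_needle_cos_two_mul_le {N : ℕ} {a b : ℝ} (hsin : 0 ≤ Real.sin a * Real.sin b)
    (hcos : 0 ≤ Real.cos a * Real.cos b) (hfar : 2 ≤ N * |Real.sin a - Real.sin b|) :
    (needle N (Real.cos (2 * b))).eval (Real.cos (2 * a)) ≤ 7 / 8 := by
  have hN : N ≠ 0 := by
    rintro rfl
    norm_num at hfar
  have hsub : 4 ≤ (N * Real.sin (a - b)) ^ 2 :=
    calc (4 : ℝ) = 2 ^ 2 := by norm_num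
      _ ≤ (N * |Real.sin a - Real.sin b|) ^ 2 := by gcongr
      _ = N ^ 2 * (Real.sin a - Real.sin b) ^ 2 := by rw [mul_pow, sq_abs]
      _ ≤ N ^ 2 * Real.sin (a - b) ^ 2 :=
        mul_le_mul_of_nonneg_left (sin_sub_sin_sq_le_sin_sub_sq hsin) (by positivity)
      _ = (N * Real.sin (a - b)) ^ 2 := (mul_pow _ _ _).symm
  have hadd : 4 ≤ (N * Real.sin (a + b)) ^ 2 := by
    rw [mul_pow] at hsub ⊢
    exact hsub.trans (mul_le_mul_of_nonneg_left (sin_sub_sq_le_sin_add_sq hsin hcos)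
      (by positivity))
  rw [eval_needle_cos hN, ← mul_add, ← mul_sub]
  linarith [fejerKernel_le_quarter hsub, fejerKernel_le_quarter hadd,
    fejerKernel_nonneg N (2 * (2 * a)), fejerKernel_nonneg N (2 * (2 * b))]

lemma sin_arcsin_sqrt {s : ℝ} (hs : s ≤ 1) : Real.sin (Real.arcsin √s) = √s :=
  Real.sin_arcsin (by linarith [Real.sqrt_nonneg s]) (Real.sqrt_le_one.2 hs)

lemma cos_two_mul_arcsin_sqrt {s : ℝ} (hs : s ∈ Set.Icc 0 1) :
    Real.cos (2 * Real.arcsin √s) = 1 - 2 * s := by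
  rw [Real.cos_two_mul, Real.cos_sq', sin_arcsin_sqrt hs.2, Real.sq_sqrt hs.1]
  ring

theorem exists_polynomial_sqrt_needle {L t₀ : ℝ} (hL : 0 < L) (ht₀ : t₀ ∈ Set.Icc 0 L) (N : ℕ) :
    ∃ q : ℝ[X], q.natDegree ≤ 2 * N ∧ q.eval t₀ = 1 ∧
      ∀ t ∈ Set.Icc 0 L, q.eval t ∈ Set.Icc 0 1 ∧
        (2 * √L ≤ N * |√t₀ - √t| → q.eval t ≤ 7 / 8) := by
  -- The substitution `t = L sin² (α t)` makes `1 - 2t/L = cos (2 α t)` and `√t = √L sin (α t)`.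
  let α (t : ℝ) : ℝ := Real.arcsin √(t / L)
  let l : ℝ[X] := C (-2 / L) * X + C 1
  have hdiv {t : ℝ} (ht : t ∈ Set.Icc 0 L) : t / L ∈ Set.Icc (0 : ℝ) 1 :=
    ⟨div_nonneg ht.1 hL.le, (div_le_one hL).2 ht.2⟩
  have hcos {t : ℝ} (ht : t ∈ Set.Icc 0 L) : l.eval t = Real.cos (2 * α t) := by
    rw [cos_two_mul_arcsin_sqrt (hdiv ht)]
    simp only [l, eval_add, eval_mul, eval_C, eval_X]
    ring
  have hsqrt {t : ℝ} (ht : t ∈ Set.Icc 0 L) : √t = √L * Real.sin (α t) := by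
    rw [sin_arcsin_sqrt (hdiv ht).2, Real.sqrt_div' t hL.le,
      mul_div_cancel₀ _ (Real.sqrt_pos.2 hL).ne']
  have hsin_nonneg {t : ℝ} (ht : t ∈ Set.Icc 0 L) : 0 ≤ Real.sin (α t) :=
    (sin_arcsin_sqrt (hdiv ht).2).symm ▸ Real.sqrt_nonneg _
  refine ⟨(needle N (Real.cos (2 * α t₀))).comp l, ?_, ?_, fun t ht => ?_⟩
  · calc _ ≤ (needle N (Real.cos (2 * α t₀))).natDegree * l.natDegree := natDegree_comp_le
      _ ≤ 2 * N * 1 := Nat.mul_le_mul (natDegree_needle_le _ _) natDegree_linear_le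
      _ = 2 * N := mul_one _
  · rw [eval_comp, hcos ht₀, eval_needle_self]
  · rw [eval_comp, hcos ht]
    refine ⟨⟨eval_needle_nonneg N (Real.abs_cos_le_one _) (Real.abs_cos_le_one _),
      eval_needle_le_one _ _ _⟩, fun hfar => ?_⟩
    refine eval_needle_cos_two_mul_le (mul_nonneg (hsin_nonneg ht) (hsin_nonneg ht₀))
      (mul_nonneg (Real.cos_arcsin_nonneg _) (Real.cos_arcsin_nonneg _)) ?_
    rw [abs_sub_comm, hsqrt ht, hsqrt ht₀, ← mul_sub, abs_mul, abs_of_nonneg (Real.sqrt_nonneg L),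
      mul_left_comm, mul_comm 2] at hfar
    exact le_of_mul_le_mul_left hfar (Real.sqrt_pos.2 hL)

end Needle

section Auerbach

variable {ι V : Type*} [NormedAddCommGroup V] [NormedSpace ℝ V]

lemma bddAbove_abs_det_image [Fintype ι] [DecidableEq ι] (e : Module.Basis ι ℝ V)
    {S : Set V} (hS : Bornology.IsBounded S) :
    BddAbove ((fun v => |e.det v|) '' Set.univ.pi fun _ : ι => S) := by
  have := Module.Finite.of_basis e
  have := FiniteDimensional.proper ℝ V
  have hcont : Continuous fun v : ι → V => |e.det v| := by
    simp only [Module.Basis.det_apply]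
    refine (Continuous.matrix_det (continuous_matrix fun i j => ?_)).abs
    exact (e.coord i).continuous_of_finiteDimensional.comp (continuous_apply j)
  have hcpt := (Bornology.IsBounded.pi fun _ : ι => hS).isCompact_closure
  exact (hcpt.bddAbove_image hcont.continuousOn).mono (Set.image_mono subset_closure)

theorem exists_basis_mem_abs_repr_le_two [Finite ι] (e : Module.Basis ι ℝ V) {S : Set V}
    (hS : Bornology.IsBounded S) (hspan : Submodule.span ℝ S = ⊤) :
    ∃ b : Module.Basis ι ℝ V, (∀ i, b i ∈ S) ∧ ∀ v ∈ S, ∀ i, |b.repr v i| ≤ 2 := by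
  classical
  have := Fintype.ofFinite ι
  set D := (fun v => |e.det v|) '' Set.univ.pi fun _ : ι => S
  have hD : BddAbove D := bddAbove_abs_det_image e hS
  obtain ⟨f₀, hf₀, hdet₀⟩ : ∃ f₀ : ι → V, (∀ i, f₀ i ∈ S) ∧ 0 < |e.det f₀| := by
    let b := Module.Basis.ofSpan hspan.ge
    let b₀ := b.reindex (b.indexEquiv e)
    exact ⟨b₀, fun i => b.reindex_apply _ i ▸
      Module.Basis.ofSpan_subset hspan.ge (Set.mem_range_self _),
      abs_pos.2 (e.isUnit_det b₀).ne_zero⟩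
  have hmem₀ : |e.det f₀| ∈ D := ⟨f₀, fun i _ => hf₀ i, rfl⟩
  have hD_pos : 0 < sSup D := hdet₀.trans_le (le_csSup hD hmem₀)
  obtain ⟨_, ⟨f, hf, rfl⟩, hlt⟩ := exists_lt_of_lt_csSup ⟨_, hmem₀⟩ (half_lt_self hD_pos)
  have hdet : 0 < |e.det f| := (half_pos hD_pos).trans hlt
  obtain ⟨hli, hsp⟩ := e.is_basis_iff_det.2 (abs_pos.1 hdet).isUnit
  refine ⟨.mk hli hsp.ge, fun i => by simpa using hf i trivial, fun v hv i => ?_⟩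
  have hcramer : e.det f * (Module.Basis.mk hli hsp.ge).repr v i =
      e.det (Function.update f i v) :=
    LinearMap.congr_fun (e.det_smul_mk_coord_eq_det_update hli hsp.ge i) v
  have hupdate : |e.det (Function.update f i v)| ≤ sSup D :=
    le_csSup hD ⟨_, fun j _ => by by_cases hj : j = i <;> simp_all, rfl⟩
  rw [← hcramer, abs_mul] at hupdate
  nlinarith

lemma abs_dual_le_card_mul {W : Type*} [AddCommGroup W] [Module ℝ W] [Fintype ι]
    (b : Module.Basis ι ℝ W) {φ : Module.Dual ℝ W} {v : W} {A B : ℝ}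
    (hv : ∀ i, |b.repr v i| ≤ A) (hφ : ∀ i, |φ (b i)| ≤ B) :
    |φ v| ≤ Fintype.card ι * (A * B) :=
  calc |φ v| = |∑ i, b.repr v i * φ (b i)| := by
        conv_lhs => rw [← b.sum_repr v, map_sum]
        simp only [map_smul, smul_eq_mul]
    _ ≤ ∑ i, |b.repr v i| * |φ (b i)| := by
        simp only [← abs_mul]
        exact Finset.abs_sum_le_sum_abs _ _
    _ ≤ ∑ _i : ι, A * B := Finset.sum_le_sum fun i _ =>
        mul_le_mul (hv i) (hφ i) (abs_nonneg _) ((abs_nonneg _).trans (hv i))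
    _ = Fintype.card ι * (A * B) := by
        rw [Finset.sum_const, nsmul_eq_mul, Finset.card_univ]

theorem exists_norm_eq_one_dual_le [Fintype ι] (e : Module.Basis ι ℝ V) {h : V → ℝ} {ε : ℝ}
    (hε : 0 < ε) (hh : ∀ ξ, ‖ξ‖ = 1 → ε ≤ h ξ) :
    ∃ f : ι → V, (∀ i, ‖f i‖ = 1) ∧
      ∀ φ : Module.Dual ℝ V, (∀ i, |φ (f i)| ≤ h (f i)) →
        ∀ ξ, ‖ξ‖ = 1 → |φ ξ| ≤ 2 * Fintype.card ι * h ξ := by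
  have hpos {ξ : V} (hξ : ‖ξ‖ = 1) : 0 < h ξ := hε.trans_le (hh ξ hξ)
  set S : Set V := (fun ξ => (h ξ)⁻¹ • ξ) '' Metric.sphere 0 1
  have hS : Bornology.IsBounded S := by
    refine (Metric.isBounded_closedBall (x := (0 : V)) (r := ε⁻¹)).subset ?_
    rintro _ ⟨ξ, hξ, rfl⟩
    rw [mem_sphere_zero_iff_norm] at hξ
    rw [mem_closedBall_zero_iff, norm_smul, hξ, mul_one, norm_inv, Real.norm_eq_abs,
      abs_of_pos (hpos hξ)]
    exact inv_anti₀ hε (hh ξ hξ)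
  have hspan : Submodule.span ℝ S = ⊤ := by
    refine eq_top_iff.2 fun v _ => ?_
    rcases eq_or_ne v 0 with rfl | hv
    · exact Submodule.zero_mem _
    have hξ : ‖‖v‖⁻¹ • v‖ = 1 := norm_smul_inv_norm (𝕜 := ℝ) hv
    have hmem : (h (‖v‖⁻¹ • v))⁻¹ • ‖v‖⁻¹ • v ∈ Submodule.span ℝ S :=
      Submodule.subset_span ⟨_, mem_sphere_zero_iff_norm.2 hξ, rfl⟩
    rwa [Submodule.smul_mem_iff _ (inv_ne_zero (hpos hξ).ne'),
      Submodule.smul_mem_iff _ (inv_ne_zero (norm_ne_zero_iff.2 hv))] at hmem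
  obtain ⟨b, hbS, hb⟩ := exists_basis_mem_abs_repr_le_two e hS hspan
  choose f hf hfb using hbS
  simp only [mem_sphere_zero_iff_norm] at hf
  refine ⟨f, hf, fun φ hφ ξ hξ => ?_⟩
  have hφb (i : ι) : |φ (b i)| ≤ 1 := by
    rw [← hfb i, map_smul, smul_eq_mul, abs_mul, abs_inv, abs_of_pos (hpos (hf i))]
    exact inv_mul_le_one_of_le₀ (hφ i) (hpos (hf i)).le
  have hφS := abs_dual_le_card_mul b (hb _ ⟨ξ, mem_sphere_zero_iff_norm.2 hξ, rfl⟩) hφb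
  rwa [map_smul, smul_eq_mul, abs_mul, abs_inv, abs_of_pos (hpos hξ),
    inv_mul_le_iff₀ (hpos hξ), mul_one, mul_comm, mul_comm _ (2 : ℝ)] at hφS

end Auerbach

section Direction

variable {d : ℕ} {Ω : Set (EuclideanSpace ℝ (Fin d))} {ξ x z : EuclideanSpace ℝ (Fin d)} {L : ℝ}

/-- The square root of the height of `z` above the supporting hyperplane of `Ω` orthogonal to `ξ`;
the metric `dubMetric Ω` compares these square roots over all unit directions. -/
noncomputable def sqrtHeight (Ω : Set (EuclideanSpace ℝ (Fin d)))
    (ξ z : EuclideanSpace ℝ (Fin d)) : ℝ :=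
  √(⟪z, ξ⟫_ℝ - dubA Ω ξ)

lemma sqrtHeight_nonneg : 0 ≤ sqrtHeight Ω ξ z :=
  Real.sqrt_nonneg _

lemma inner_sub_dubA_mem_Icc (hΩ : Bornology.IsBounded Ω) (hL : Metric.diam Ω ≤ L)
    (hξ : ‖ξ‖ ≤ 1) (hz : z ∈ Ω) : ⟪z, ξ⟫_ℝ - dubA Ω ξ ∈ Set.Icc 0 L := by
  have hlower : ∀ s ∈ (fun y => ⟪y, ξ⟫_ℝ) '' Ω, ⟪z, ξ⟫_ℝ - L ≤ s := by
    rintro _ ⟨y, hy, rfl⟩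
    rw [sub_le_comm, ← inner_sub_left]
    calc ⟪z - y, ξ⟫_ℝ ≤ ‖z - y‖ * ‖ξ‖ := real_inner_le_norm _ _
      _ ≤ ‖z - y‖ := mul_le_of_le_one_right (norm_nonneg _) hξ
      _ = dist z y := (dist_eq_norm z y).symm
      _ ≤ L := (Metric.dist_le_diam_of_mem hΩ hz hy).trans hL
  exact ⟨sub_nonneg.2 (csInf_le ⟨_, hlower⟩ ⟨z, hz, rfl⟩),
    sub_le_comm.1 (le_csInf ⟨_, z, hz, rfl⟩ hlower)⟩

lemma sq_sqrtHeight (hΩ : Bornology.IsBounded Ω) (hξ : ‖ξ‖ ≤ 1) (hz : z ∈ Ω) :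
    sqrtHeight Ω ξ z ^ 2 = ⟪z, ξ⟫_ℝ - dubA Ω ξ :=
  Real.sq_sqrt (inner_sub_dubA_mem_Icc hΩ le_rfl hξ hz).1

lemma sqrtHeight_le_sqrt (hΩ : Bornology.IsBounded Ω) (hL : Metric.diam Ω ≤ L) (hξ : ‖ξ‖ ≤ 1)
    (hz : z ∈ Ω) : sqrtHeight Ω ξ z ≤ √L :=
  Real.sqrt_le_sqrt (inner_sub_dubA_mem_Icc hΩ hL hξ hz).2

lemma abs_inner_sub_eq (hΩ : Bornology.IsBounded Ω) (hξ : ‖ξ‖ ≤ 1) (hx : x ∈ Ω) (hz : z ∈ Ω) :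
    |⟪x - z, ξ⟫_ℝ| =
      |sqrtHeight Ω ξ x - sqrtHeight Ω ξ z| * (sqrtHeight Ω ξ x + sqrtHeight Ω ξ z) := by
  rw [← abs_of_nonneg (add_nonneg (sqrtHeight_nonneg (z := x)) (sqrtHeight_nonneg (z := z))),
    ← abs_mul, inner_sub_left]
  congr 1
  linear_combination sq_sqrtHeight hΩ hξ hz - sq_sqrtHeight hΩ hξ hx

lemma dubMetric_le {r : ℝ} (hr : 0 ≤ r)
    (h : ∀ ξ, ‖ξ‖ = 1 → |sqrtHeight Ω ξ x - sqrtHeight Ω ξ z| ≤ r) : dubMetric Ω x z ≤ r :=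
  Real.iSup_le (fun ξ => h ξ (mem_sphere_zero_iff_norm.1 ξ.2)) hr

lemma dubMetric_le_sqrt (hΩ : Bornology.IsBounded Ω) (hL : Metric.diam Ω ≤ L) (hx : x ∈ Ω)
    (hz : z ∈ Ω) : dubMetric Ω x z ≤ √L :=
  dubMetric_le (Real.sqrt_nonneg L) fun _ hξ =>
    abs_sub_le_of_nonneg_of_le sqrtHeight_nonneg (sqrtHeight_le_sqrt hΩ hL hξ.le hx)
      sqrtHeight_nonneg (sqrtHeight_le_sqrt hΩ hL hξ.le hz)

lemma le_of_mul_le_quadratic {δ s r k : ℝ} (hr : 0 < r) (hk : 1 ≤ k) (hδ : δ ≤ s)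
    (h : δ * s ≤ 2 * k * (r ^ 2 + 2 * r * s)) : δ ≤ 5 * k * r := by
  by_contra! hlt
  have hkr : 0 < k * r := by positivity
  have hgap : k * r * (5 * k * r) < (δ - 4 * k * r) * s :=
    mul_lt_mul'' (by linarith) (hlt.trans_le hδ) hkr.le (by linarith)
  have hk_sq : k * r ^ 2 ≤ k ^ 2 * r ^ 2 :=
    mul_le_mul_of_nonneg_right (le_self_pow₀ hk two_ne_zero) (sq_nonneg r)
  nlinarith [mul_pos hkr hkr]

theorem exists_norm_eq_one_dubMetric_le (hd : 1 ≤ d) (hΩ : Bornology.IsBounded Ω) (hx : x ∈ Ω)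
    {r : ℝ} (hr : 0 < r) :
    ∃ f : Fin d → EuclideanSpace ℝ (Fin d), (∀ i, ‖f i‖ = 1) ∧
      ∀ z ∈ Ω, (∀ i, |sqrtHeight Ω (f i) x - sqrtHeight Ω (f i) z| < r) →
        dubMetric Ω x z ≤ 5 * d * r := by
  have hd' : (1 : ℝ) ≤ d := mod_cast hd
  -- `|√a - √b| < r` forces `|a - b| ≤ r² + 2r√a`.
  let h (ξ : EuclideanSpace ℝ (Fin d)) : ℝ := r ^ 2 + 2 * r * sqrtHeight Ω ξ x
  have hh (ξ : EuclideanSpace ℝ (Fin d)) (_ : ‖ξ‖ = 1) : r ^ 2 ≤ h ξ :=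
    le_add_of_nonneg_right (mul_nonneg (by positivity) sqrtHeight_nonneg)
  obtain ⟨f, hf, hspread⟩ := exists_norm_eq_one_dual_le
    (EuclideanSpace.basisFun (Fin d) ℝ).toBasis (pow_pos hr 2) hh
  refine ⟨f, hf, fun z hz hclose => dubMetric_le (by positivity) fun ξ hξ => ?_⟩
  have hinner_f (i : Fin d) : |⟪x - z, f i⟫_ℝ| ≤ h (f i) := by
    have hsum : sqrtHeight Ω (f i) x + sqrtHeight Ω (f i) z ≤ r + 2 * sqrtHeight Ω (f i) x := by
      linarith [(abs_lt.1 (hclose i)).1]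
    calc |⟪x - z, f i⟫_ℝ| = _ := abs_inner_sub_eq hΩ (hf i).le hx hz
      _ ≤ r * (r + 2 * sqrtHeight Ω (f i) x) := mul_le_mul (hclose i).le hsum
          (add_nonneg sqrtHeight_nonneg sqrtHeight_nonneg) hr.le
      _ = h (f i) := by ring
  have hinner : |⟪x - z, ξ⟫_ℝ| ≤ 2 * d * h ξ := by
    simpa only [Fintype.card_fin, innerₛₗ_apply_apply] using
      hspread (innerₛₗ ℝ (x - z)) hinner_f ξ hξ
  have hu := sqrtHeight_nonneg (Ω := Ω) (ξ := ξ) (z := x)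
  have hv := sqrtHeight_nonneg (Ω := Ω) (ξ := ξ) (z := z)
  refine le_of_mul_le_quadratic hr hd' (abs_sub_le_of_nonneg_of_le hu (by linarith) hv
    (by linarith)) (s := sqrtHeight Ω ξ x + sqrtHeight Ω ξ z) ?_
  rw [← abs_inner_sub_eq hΩ hξ.le hx hz]
  calc |⟪x - z, ξ⟫_ℝ| ≤ 2 * d * h ξ := hinner
    _ ≤ 2 * d * (r ^ 2 + 2 * r * (sqrtHeight Ω ξ x + sqrtHeight Ω ξ z)) := by
      simp only [h]
      gcongr
      linarith

end Direction

section Peak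

variable {ι : Type*} {Ω : Set (EuclideanSpace ℝ ι)} {x z : EuclideanSpace ℝ ι}

/-- `P` attains its maximum `1` over `Ω` at `x` and is nonnegative on `Ω`; unlike for the usual
peak functions, `x` need not be the only maximiser. This class is closed under products. -/
def IsPeak (Ω : Set (EuclideanSpace ℝ ι)) (x : EuclideanSpace ℝ ι) (P : MvPolynomial ι ℝ) :
    Prop :=
  MvPolynomial.eval x.ofLp P = 1 ∧ ∀ z ∈ Ω, MvPolynomial.eval z.ofLp P ∈ Set.Icc 0 1

namespace IsPeak

lemma one : IsPeak Ω x 1 :=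
  ⟨map_one _, fun z _ => by simp only [map_one, Set.mem_Icc, zero_le_one, le_refl, and_self]⟩

lemma pow {P : MvPolynomial ι ℝ} (hP : IsPeak Ω x P) (n : ℕ) : IsPeak Ω x (P ^ n) := by
  simp only [IsPeak, map_pow]
  exact ⟨by rw [hP.1, one_pow], fun z hz =>
    ⟨pow_nonneg (hP.2 z hz).1 n, pow_le_one₀ (hP.2 z hz).1 (hP.2 z hz).2⟩⟩

variable {κ : Type*} {s : Finset κ} {P : κ → MvPolynomial ι ℝ}

lemma prod (hP : ∀ k ∈ s, IsPeak Ω x (P k)) : IsPeak Ω x (∏ k ∈ s, P k) := by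
  simp only [IsPeak, map_prod]
  exact ⟨Finset.prod_eq_one fun k hk => (hP k hk).1, fun z hz =>
    ⟨Finset.prod_nonneg fun k hk => ((hP k hk).2 z hz).1,
      Finset.prod_le_one (fun k hk => ((hP k hk).2 z hz).1) fun k hk => ((hP k hk).2 z hz).2⟩⟩

lemma eval_prod_le (hP : ∀ k ∈ s, IsPeak Ω x (P k)) (hz : z ∈ Ω) {k : κ} (hk : k ∈ s) :
    MvPolynomial.eval z.ofLp (∏ k ∈ s, P k) ≤ MvPolynomial.eval z.ofLp (P k) := by
  classical
  rw [← Finset.mul_prod_erase s P hk, map_mul]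
  exact mul_le_of_le_one_right ((hP k hk).2 z hz).1
    ((prod fun j hj => hP j (Finset.mem_of_mem_erase hj)).2 z hz).2

end IsPeak

end Peak

section Ridge

lemma totalDegree_aeval_le {R σ : Type*} [CommSemiring R] (q : Polynomial R)
    (l : MvPolynomial σ R) :
    (Polynomial.aeval l q).totalDegree ≤ q.natDegree * l.totalDegree := by
  rw [Polynomial.aeval_eq_sum_range]
  refine MvPolynomial.totalDegree_finsetSum_le fun i hi => ?_
  calc (q.coeff i • l ^ i).totalDegree
    _ ≤ (l ^ i).totalDegree := MvPolynomial.totalDegree_smul_le _ _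
    _ ≤ i * l.totalDegree := MvPolynomial.totalDegree_pow _ _
    _ ≤ q.natDegree * l.totalDegree :=
      Nat.mul_le_mul_right _ (Finset.mem_range_succ_iff.1 hi)

variable {ι : Type*} [Fintype ι]

/-- The ridge polynomial `z ↦ q (⟪z, ξ⟫ - a)`. -/
noncomputable def ridge (q : Polynomial ℝ) (ξ : EuclideanSpace ℝ ι) (a : ℝ) :
    MvPolynomial ι ℝ :=
  Polynomial.aeval (∑ i, MvPolynomial.C (ξ i) * MvPolynomial.X i - MvPolynomial.C a) q

lemma eval_ridge (q : Polynomial ℝ) (ξ z : EuclideanSpace ℝ ι) (a : ℝ) :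
    MvPolynomial.eval z.ofLp (ridge q ξ a) = q.eval (⟪z, ξ⟫_ℝ - a) := by
  have hlinear : MvPolynomial.aeval z.ofLp
      (∑ i, MvPolynomial.C (ξ i) * MvPolynomial.X i - MvPolynomial.C a) = ⟪z, ξ⟫_ℝ - a := by
    simp [PiLp.inner_apply]
  rw [← MvPolynomial.coe_aeval_eq_eval, RingHom.coe_coe, ridge, ← Polynomial.aeval_algHom_apply,
    hlinear, Polynomial.coe_aeval_eq_eval]

lemma totalDegree_ridge_le (q : Polynomial ℝ) (ξ : EuclideanSpace ℝ ι) (a : ℝ) :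
    (ridge q ξ a).totalDegree ≤ q.natDegree := by
  refine (totalDegree_aeval_le _ _).trans (mul_le_of_le_one_right' ?_)
  refine (MvPolynomial.totalDegree_sub_C_le _ _).trans ?_
  refine MvPolynomial.totalDegree_finsetSum_le fun i _ => ?_
  rw [← MvPolynomial.smul_eq_C_mul]
  exact (MvPolynomial.totalDegree_smul_le _ _).trans (MvPolynomial.totalDegree_X i).le

end Ridge

section Dyadic

lemma sum_two_pow_mul_div_le (n K : ℕ) {m : ℕ} (hm : 1 ≤ m) :
    ∑ k ∈ Finset.range K, 2 ^ k * (m * (n / (2 * m * 4 ^ k))) ≤ n := by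
  have hterm (k : ℕ) :
      (2 ^ k * (m * (n / (2 * m * 4 ^ k) : ℕ)) : ℝ) ≤ n / 2 * (1 / 2) ^ k :=
    calc (2 ^ k * (m * (n / (2 * m * 4 ^ k) : ℕ)) : ℝ)
        ≤ 2 ^ k * (m * (n / (2 * m * 4 ^ k))) := by
          gcongr
          exact_mod_cast Nat.cast_div_le (α := ℝ) (m := n) (n := 2 * m * 4 ^ k)
      _ = n / 2 * (1 / 2) ^ k := by
          rw [show (4 : ℝ) ^ k = 2 ^ k * 2 ^ k by rw [← mul_pow]; norm_num, one_div, inv_pow]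
          field_simp
  have hsum : (∑ k ∈ Finset.range K, 2 ^ k * (m * (n / (2 * m * 4 ^ k) : ℕ)) : ℝ) ≤ n :=
    calc _ ≤ ∑ k ∈ Finset.range K, (n / 2 : ℝ) * (1 / 2) ^ k :=
          Finset.sum_le_sum fun k _ => hterm k
      _ ≤ n / 2 * 2 := by
          rw [← Finset.mul_sum]
          gcongr
          exact sum_geometric_two_le K
      _ = n := div_mul_cancel₀ _ two_ne_zero
  exact_mod_cast hsum

lemma exists_dyadic_scale {n m : ℕ} {B R E ρ : ℝ} (hm : 1 ≤ m) (hB : 0 ≤ B) (hE : 0 < E)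
    (hBR : 2 * m * (B + R) ≤ E) (hρR : ρ ≤ R) (hρ : E ≤ n * ρ) :
    ∃ k < n, B < (n / (2 * m * 4 ^ k) : ℕ) * ρ ∧ √(n * ρ) ≤ 2 * 2 ^ k * √E := by
  obtain ⟨k, hk_le, hk_lt⟩ := exists_nat_pow_near ((one_le_div hE).2 hρ) (by norm_num : (1 : ℝ) < 4)
  rw [le_div_iff₀ hE] at hk_le
  rw [div_lt_iff₀ hE] at hk_lt
  have hρ_pos : 0 < ρ := pos_of_mul_pos_right (hE.trans_le hρ) n.cast_nonneg
  have hm' : (1 : ℝ) ≤ m := mod_cast hm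
  have hRE : R ≤ E := by nlinarith
  refine ⟨k, ?_, ?_, ?_⟩
  · have hpow : (4 : ℝ) ^ k ≤ n := by
      refine le_of_mul_le_mul_right (hk_le.trans ?_) hE
      gcongr
      exact hρR.trans hRE
    exact (Nat.lt_pow_self (by norm_num)).trans_le (mod_cast hpow)
  · set N := n / (2 * m * 4 ^ k)
    have hfloor : (n : ℝ) < 2 * m * 4 ^ k * (N + 1) := by
      exact_mod_cast Nat.lt_mul_div_succ n (by positivity : 0 < 2 * m * 4 ^ k)
    have hlarge : 4 ^ k * (2 * m * (B + R)) < 4 ^ k * (2 * m * ((N + 1) * ρ)) :=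
      calc 4 ^ k * (2 * m * (B + R)) ≤ 4 ^ k * E := by gcongr
        _ ≤ n * ρ := hk_le
        _ < 2 * m * 4 ^ k * (N + 1) * ρ := by gcongr
        _ = 4 ^ k * (2 * m * ((N + 1) * ρ)) := by ring
    have := lt_of_mul_lt_mul_left (lt_of_mul_lt_mul_left hlarge (by positivity)) (by positivity)
    linarith
  · refine Real.sqrt_le_iff.2 ⟨by positivity, hk_lt.le.trans_eq ?_⟩
    rw [pow_succ, show (4 : ℝ) ^ k = (2 ^ k) ^ 2 by rw [pow_right_comm]; norm_num, mul_pow,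
      Real.sq_sqrt hE.le]
    ring

lemma seven_eighths_pow_le_exp {a e : ℝ} {j : ℕ} (he : 0 < e) (h : a ≤ 2 * j * e) :
    (7 / 8 : ℝ) ^ j ≤ Real.exp (-(1 / (16 * e)) * a) :=
  calc (7 / 8 : ℝ) ^ j ≤ Real.exp (-(1 / 8)) ^ j := by
        gcongr
        linarith [Real.add_one_le_exp (-(1 / 8 : ℝ))]
    _ = Real.exp (j * -(1 / 8)) := (Real.exp_nat_mul _ _).symm
    _ ≤ Real.exp (-(1 / (16 * e)) * a) := by
        rw [Real.exp_le_exp, mul_neg, neg_mul, neg_le_neg_iff, one_div_mul_eq_div,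
          div_le_iff₀ (by positivity)]
        linarith

lemma one_le_two_mul_exp {a e : ℝ} (he : 0 < e) (h : a ≤ e) :
    1 ≤ 2 * Real.exp (-(1 / (16 * e)) * a) := by
  have hexponent : 1 / (16 * e) * a ≤ 1 / 2 := by
    rw [one_div_mul_eq_div, div_le_iff₀ (by positivity)]
    linarith
  linarith [Real.add_one_le_exp (-(1 / (16 * e)) * a)]

variable {ι : Type*} {Ω : Set (EuclideanSpace ℝ ι)} {x : EuclideanSpace ℝ ι}

theorem exists_isPeak_eval_le_exp_neg_sqrt {ρ : EuclideanSpace ℝ ι → ℝ} {m : ℕ} {B R E : ℝ}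
    (hm : 1 ≤ m) (hB : 0 ≤ B) (hE : 0 < E) (hBR : 2 * m * (B + R) ≤ E) (hρ : ∀ z ∈ Ω, ρ z ≤ R)
    (hpeak : ∀ N : ℕ, ∃ Q : MvPolynomial ι ℝ, Q.totalDegree ≤ m * N ∧ IsPeak Ω x Q ∧
      ∀ z ∈ Ω, B < N * ρ z → MvPolynomial.eval z.ofLp Q ≤ 7 / 8) (n : ℕ) :
    ∃ P : MvPolynomial ι ℝ, P.totalDegree ≤ n ∧ IsPeak Ω x P ∧
      ∀ z ∈ Ω, MvPolynomial.eval z.ofLp P ≤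
        2 * Real.exp (-(1 / (16 * √E)) * √(n * ρ z)) := by
  choose Q hQ_deg hQ hQ_le using hpeak
  let P (k : ℕ) : MvPolynomial ι ℝ := Q (n / (2 * m * 4 ^ k)) ^ 2 ^ k
  have hP (k : ℕ) (_ : k ∈ Finset.range n) : IsPeak Ω x (P k) := (hQ _).pow _
  have hprod : IsPeak Ω x (∏ k ∈ Finset.range n, P k) := .prod hP
  refine ⟨∏ k ∈ Finset.range n, P k, ?_, hprod, fun z hz => ?_⟩
  · calc (∏ k ∈ Finset.range n, P k).totalDegree
        ≤ ∑ k ∈ Finset.range n, (P k).totalDegree := MvPolynomial.totalDegree_finsetProd _ _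
      _ ≤ ∑ k ∈ Finset.range n, 2 ^ k * (m * (n / (2 * m * 4 ^ k))) :=
          Finset.sum_le_sum fun k _ =>
            (MvPolynomial.totalDegree_pow _ _).trans (Nat.mul_le_mul_left _ (hQ_deg _))
      _ ≤ n := sum_two_pow_mul_div_le n n hm
  have hE_sqrt : 0 < √E := Real.sqrt_pos.2 hE
  rcases le_or_gt E (n * ρ z) with hfar | hnear
  · obtain ⟨k, hk, hBk, hsqrt⟩ := exists_dyadic_scale hm hB hE hBR (hρ z hz) hfar
    calc MvPolynomial.eval z.ofLp (∏ k ∈ Finset.range n, P k)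
        ≤ MvPolynomial.eval z.ofLp (P k) :=
          IsPeak.eval_prod_le hP hz (Finset.mem_range.2 hk)
      _ ≤ (7 / 8) ^ 2 ^ k := by
          rw [map_pow]
          exact pow_le_pow_left₀ ((hQ _).2 z hz).1 (hQ_le _ z hz hBk) _
      _ ≤ Real.exp (-(1 / (16 * √E)) * √(n * ρ z)) :=
          seven_eighths_pow_le_exp hE_sqrt (by exact_mod_cast hsqrt)
      _ ≤ 2 * Real.exp (-(1 / (16 * √E)) * √(n * ρ z)) :=
          le_mul_of_one_le_left (Real.exp_nonneg _) one_le_two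
  · exact (hprod.2 z hz).2.trans (one_le_two_mul_exp hE_sqrt (Real.sqrt_le_sqrt hnear.le))

end Dyadic

section SingleScale

variable {d : ℕ} {Ω : Set (EuclideanSpace ℝ (Fin d))} {x : EuclideanSpace ℝ (Fin d)} {L : ℝ}

lemma exists_isPeak_of_norm_eq_one (hΩ : Bornology.IsBounded Ω) (hL : 0 < L)
    (hdiam : Metric.diam Ω ≤ L) (hx : x ∈ Ω) {ξ : EuclideanSpace ℝ (Fin d)} (hξ : ‖ξ‖ = 1)
    (N : ℕ) :
    ∃ Q : MvPolynomial (Fin d) ℝ, Q.totalDegree ≤ 2 * N ∧ IsPeak Ω x Q ∧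
      ∀ z ∈ Ω, 2 * √L ≤ N * |sqrtHeight Ω ξ x - sqrtHeight Ω ξ z| →
        MvPolynomial.eval z.ofLp Q ≤ 7 / 8 := by
  have hmem {z : EuclideanSpace ℝ (Fin d)} (hz : z ∈ Ω) :=
    inner_sub_dubA_mem_Icc hΩ hdiam hξ.le hz
  obtain ⟨q, hq_deg, hqx, hq⟩ := exists_polynomial_sqrt_needle hL (hmem hx) N
  refine ⟨ridge q ξ (dubA Ω ξ), (totalDegree_ridge_le _ _ _).trans hq_deg, ⟨?_, fun z hz => ?_⟩,
    fun z hz hfar => ?_⟩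
  · rwa [eval_ridge]
  · rw [eval_ridge]
    exact (hq _ (hmem hz)).1
  · rw [eval_ridge]
    exact (hq _ (hmem hz)).2 hfar

theorem exists_isPeak_eval_le_seven_eighths (hd : 1 ≤ d) (hΩ : Bornology.IsBounded Ω)
    (hL : 0 < L) (hdiam : Metric.diam Ω ≤ L) (hx : x ∈ Ω) (N : ℕ) :
    ∃ Q : MvPolynomial (Fin d) ℝ, Q.totalDegree ≤ 2 * d * N ∧ IsPeak Ω x Q ∧
      ∀ z ∈ Ω, 10 * d * √L < N * dubMetric Ω x z → MvPolynomial.eval z.ofLp Q ≤ 7 / 8 := by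
  rcases N.eq_zero_or_pos with rfl | hN
  · refine ⟨1, by simp, .one, fun z _ hfar => absurd hfar (not_lt.2 ?_)⟩
    rw [Nat.cast_zero, zero_mul]
    positivity
  have hr : 0 < 2 * √L / N := by positivity
  obtain ⟨f, hf, hspread⟩ := exists_norm_eq_one_dubMetric_le hd hΩ hx hr
  choose Q hQ_deg hQ hQ_le using fun i => exists_isPeak_of_norm_eq_one hΩ hL hdiam hx (hf i) N
  refine ⟨∏ i, Q i, ?_, .prod fun i _ => hQ i, fun z hz hfar => ?_⟩
  · calc (∏ i, Q i).totalDegree ≤ ∑ i, (Q i).totalDegree := MvPolynomial.totalDegree_finsetProd _ _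
      _ ≤ ∑ _i : Fin d, 2 * N := Finset.sum_le_sum fun i _ => hQ_deg i
      _ = 2 * d * N := by
        rw [Finset.sum_const, Finset.card_univ, Fintype.card_fin, smul_eq_mul]
        ring
  · obtain ⟨i, hi⟩ : ∃ i, 2 * √L / N ≤ |sqrtHeight Ω (f i) x - sqrtHeight Ω (f i) z| := by
      by_contra! hclose
      refine hfar.not_ge ?_
      calc N * dubMetric Ω x z ≤ N * (5 * d * (2 * √L / N)) := by
            gcongr
            exact hspread z hz hclose
        _ = 10 * d * √L := by
            field_simp
            norm_num
    rw [div_le_iff₀' (by positivity)] at hi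
    exact (IsPeak.eval_prod_le (fun j _ => hQ j) hz (Finset.mem_univ i)).trans (hQ_le i z hz hi)

end SingleScale

theorem fast_decreasing_polynomials_general {d : ℕ} (hd : 1 ≤ d) (L : ℝ) :
    ∃ C > (1 : ℝ), ∃ c ∈ Set.Ioo (0 : ℝ) 1,
      ∀ Ω : Set (EuclideanSpace ℝ (Fin d)), Bornology.IsBounded Ω → Metric.diam Ω ≤ L →
      ∀ x ∈ Ω, ∀ n : ℕ,
      ∃ P : MvPolynomial (Fin d) ℝ, P.totalDegree ≤ n ∧
        MvPolynomial.eval (fun i => x i) P = 1 ∧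
        ∀ z ∈ Ω, 0 ≤ MvPolynomial.eval (fun i => z i) P ∧
          MvPolynomial.eval (fun i => z i) P ≤
            C * Real.exp (-c * Real.sqrt (n * dubMetric Ω x z)) := by
  have hd' : (1 : ℝ) ≤ d := mod_cast hd
  have hL : 0 < max L 1 := zero_lt_one.trans_le (le_max_right L 1)
  set R := √(max L 1)
  have hR : 1 ≤ R := Real.one_le_sqrt.2 (le_max_right L 1)
  set E := 2 * (2 * d : ℕ) * (10 * d * R + R) with hE_def
  have hE : 1 ≤ E := by
    have hdR : 1 ≤ d * R := one_le_mul_of_one_le_of_one_le hd' hR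
    rw [hE_def]
    push_cast
    nlinarith
  have hE_sqrt : 1 ≤ √E := Real.one_le_sqrt.2 hE
  refine ⟨2, one_lt_two, 1 / (16 * √E), ⟨by positivity, ?_⟩, fun Ω hΩ hdiam x hx n => ?_⟩
  · rw [div_lt_one (by positivity)]
    linarith
  have hdiam' : Metric.diam Ω ≤ max L 1 := hdiam.trans (le_max_left L 1)
  obtain ⟨P, hP_deg, ⟨hPx, hP⟩, hP_le⟩ := exists_isPeak_eval_le_exp_neg_sqrt
    (show 1 ≤ 2 * d by lia) (by positivity) (zero_lt_one.trans_le hE) hE_def.ge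
    (fun z hz => dubMetric_le_sqrt hΩ hdiam' hx hz)
    (exists_isPeak_eval_le_seven_eighths hd hΩ hL hdiam' hx) n
  exact ⟨P, hP_deg, hPx, fun z hz => ⟨(hP z hz).1, hP_le z hz⟩⟩

theorem fast_decreasing_polynomials {d : ℕ} (hd : 1 ≤ d) :
    ∃ C > (1 : ℝ), ∃ c ∈ Set.Ioo (0 : ℝ) 1,
      ∀ Ω : Set (EuclideanSpace ℝ (Fin d)),
      IsCompact Ω → Convex ℝ Ω →
      Metric.closedBall (0 : EuclideanSpace ℝ (Fin d)) 1 ⊆ Ω →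
      Ω ⊆ Metric.closedBall (0 : EuclideanSpace ℝ (Fin d)) d →
      ∀ x ∈ Ω, ∀ n : ℕ, 1 ≤ n →
      ∃ P : MvPolynomial (Fin d) ℝ, P.totalDegree ≤ n ∧
        MvPolynomial.eval (fun i => x i) P = 1 ∧
        ∀ z ∈ Ω, 0 ≤ MvPolynomial.eval (fun i => z i) P ∧
          MvPolynomial.eval (fun i => z i) P ≤
            C * Real.exp (-c * Real.sqrt (n * dubMetric Ω x z)) := by
  obtain ⟨C, hC, c, hc, hP⟩ := fast_decreasing_polynomials_general hd (2 * d)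
  exact ⟨C, hC, c, hc, fun Ω _ _ _ hΩ x hx n _ =>
    hP Ω (Metric.isBounded_closedBall.subset hΩ)
      (Metric.diam_le_of_subset_closedBall d.cast_nonneg hΩ) x hx n⟩
end
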